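/- Let S ⊂ ℝ^k be a halfspace and Σ an additive subgroup of ℝ^k. If G ∈ (AP^k_Σ)^{n×n} takes Hermitian values (G(t)* = G(t) for all t ∈ ℝ^k) and admits a canonical left (AP_S)_Σ factorization, then G admits a canonical factorization in the symmetric form G = B* D B, where B is an n×n matrix function invertible in (AP^k_{Σ∩(−S)})^{n×n}, B* is its pointwise conjugate-transpose, and D is a constant diagonal matrix whose diagonal entries are ±1. -/

import Mathlib

/- Almost periodic functions of `k` real variables, their Bohr-Fourier
coefficients and spectra, the Wiener algebra, and halfspaces. -/

open MeasureTheory Filter BoundedContinuousFunction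

noncomputable section

/-- The Banach algebra of bounded continuous functions `ℝ^k → ℂ` (sup norm). -/
abbrev APB (k : ℕ) := BoundedContinuousFunction (Fin k → ℝ) ℂ

/-- The elementary exponential `e_λ(x) = e^{i⟨λ,x⟩}` as a bounded continuous function. -/
def apExp (k : ℕ) (lam : Fin k → ℝ) : APB k :=
  BoundedContinuousFunction.ofNormedAddCommGroup
    (fun x => Complex.exp (Complex.I * ((∑ j, lam j * x j : ℝ) : ℂ)))
    (by fun_prop) 1
    (fun x => by
      simp [Complex.norm_exp, Complex.mul_re])

/-- `AP^k`: the closed subalgebra of `L^∞`-type bounded continuous functions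
generated by all exponentials `e_λ`, `λ ∈ ℝ^k`. -/
def APalg (k : ℕ) : Subalgebra ℂ (APB k) :=
  (Algebra.adjoin ℂ (Set.range (apExp k))).topologicalClosure

/-- The Bohr-Fourier coefficient
`f_λ = lim_{T→∞} (2T)^{-k} ∫_{[-T,T]^k} e^{-i⟨λ,x⟩} f(x) dx`. -/
def bohrCoeff (k : ℕ) (f : (Fin k → ℝ) → ℂ) (lam : Fin k → ℝ) : ℂ :=
  limUnder atTop (fun T : ℝ =>
    (((2 * T) ^ k : ℝ) : ℂ)⁻¹ *
      ∫ x in Set.Icc (fun _ => -T : Fin k → ℝ) (fun _ => T),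
        Complex.exp (-(Complex.I * ((∑ j, lam j * x j : ℝ) : ℂ))) * f x)

/-- The Bohr-Fourier spectrum `σ(f) = {λ : f_λ ≠ 0}`. -/
def bohrSpectrum (k : ℕ) (f : (Fin k → ℝ) → ℂ) : Set (Fin k → ℝ) :=
  {lam | bohrCoeff k f lam ≠ 0}

/-- Membership in `AP^k_Δ = {f ∈ AP^k : σ(f) ⊆ Δ}`. -/
def APmem (k : ℕ) (Δ : Set (Fin k → ℝ)) (f : APB k) : Prop :=
  f ∈ APalg k ∧ bohrSpectrum k ⇑f ⊆ Δ

/-- Membership in the Wiener algebra `APW^k_Δ`: almost periodic with spectrum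
in `Δ` and absolutely convergent Bohr-Fourier series. -/
def APWmem (k : ℕ) (Δ : Set (Fin k → ℝ)) (f : APB k) : Prop :=
  APmem k Δ f ∧ Summable (fun lam => ‖bohrCoeff k (⇑f) lam‖)

/-- The Wiener norm `‖f‖_W = ∑_λ |f_λ|`. -/
def wienerNorm (k : ℕ) (f : (Fin k → ℝ) → ℂ) : ℝ :=
  ∑' lam, ‖bohrCoeff k f lam‖

/-- A halfspace `S ⊂ ℝ^k`: `ℝ^k = S ∪ (-S)`, `S ∩ (-S) = {0}`, and `S` is
closed under addition and under multiplication by nonnegative reals. -/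
structure IsHalfspace (k : ℕ) (S : Set (Fin k → ℝ)) : Prop where
  union : S ∪ -S = Set.univ
  inter : S ∩ -S = {0}
  add_mem : ∀ x ∈ S, ∀ y ∈ S, x + y ∈ S
  smul_mem : ∀ x ∈ S, ∀ a : ℝ, 0 ≤ a → a • x ∈ S

/- Left `(AP_S)_Σ` and `(APW_S)_Σ` factorizations of rectangular almost
periodic matrix functions. -/

/-- `G = G⁺ · diag(e_{λ_1},…,e_{λ_p}) · G⁻` is a left `(AP_S)_Σ` factorization
of `G` with factorization indices `lam`: the entries of `G⁺` lie in
`AP^k_{Σ∩S}` and `G⁺` is right invertible over `AP^k_{Σ∩S}`, the entries of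
`G⁻` lie in `AP^k_{Σ∩(-S)}` and `G⁻` is left invertible over `AP^k_{Σ∩(-S)}`,
and all indices lie in `Σ`. -/
def IsAPFactorization (k : ℕ) {m n p : ℕ} (S Sg : Set (Fin k → ℝ))
    (G : Matrix (Fin m) (Fin n) (APB k)) (lam : Fin p → (Fin k → ℝ))
    (Gp : Matrix (Fin m) (Fin p) (APB k)) (Gm : Matrix (Fin p) (Fin n) (APB k)) : Prop :=
  (∀ i j, APmem k (Sg ∩ S) (Gp i j)) ∧
  (∀ i j, APmem k (Sg ∩ (-S)) (Gm i j)) ∧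
  (∀ j, lam j ∈ Sg) ∧
  (∃ Gpr : Matrix (Fin p) (Fin m) (APB k),
      (∀ i j, APmem k (Sg ∩ S) (Gpr i j)) ∧ Gp * Gpr = 1) ∧
  (∃ Gml : Matrix (Fin n) (Fin p) (APB k),
      (∀ i j, APmem k (Sg ∩ (-S)) (Gml i j)) ∧ Gml * Gm = 1) ∧
  G = Gp * Matrix.diagonal (fun j => apExp k (lam j)) * Gm

/-- A left `(APW_S)_Σ` factorization: as `IsAPFactorization`, with the Wiener
algebra `APW` in place of `AP` throughout. -/
def IsAPWFactorization (k : ℕ) {m n p : ℕ} (S Sg : Set (Fin k → ℝ))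
    (G : Matrix (Fin m) (Fin n) (APB k)) (lam : Fin p → (Fin k → ℝ))
    (Gp : Matrix (Fin m) (Fin p) (APB k)) (Gm : Matrix (Fin p) (Fin n) (APB k)) : Prop :=
  (∀ i j, APWmem k (Sg ∩ S) (Gp i j)) ∧
  (∀ i j, APWmem k (Sg ∩ (-S)) (Gm i j)) ∧
  (∀ j, lam j ∈ Sg) ∧
  (∃ Gpr : Matrix (Fin p) (Fin m) (APB k),
      (∀ i j, APWmem k (Sg ∩ S) (Gpr i j)) ∧ Gp * Gpr = 1) ∧
  (∃ Gml : Matrix (Fin n) (Fin p) (APB k),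
      (∀ i j, APWmem k (Sg ∩ (-S)) (Gml i j)) ∧ Gml * Gm = 1) ∧
  G = Gp * Matrix.diagonal (fun j => apExp k (lam j)) * Gm

/-!
If `G = G⁺ G⁻`, the Hermitian matrix `L = (G⁻)⁻* G (G⁻)⁻¹ = (G⁻)⁻* G⁺` has its spectrum in `S`,
hence also in `-S`, so in `S ∩ -S = {0}`: it is constant. Sylvester's law of inertia applied to `L`
in `G = (G⁻)* L G⁻` yields the symmetric form.

That `AP^k_Δ` is an algebra and that functions are determined by their Bohr-Fourier coefficients
both come from Parseval's identity: the exponentials are an orthonormal basis of the GNS space of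
the Bohr mean. The mean is faithful because the translates of an almost periodic function form a
precompact set, so finitely many of them have a sum bounded below as soon as the function is
nonnegative and nonzero.
-/

section Sylvester

open Matrix

variable {𝕜 ι : Type*} [RCLike 𝕜] [Fintype ι] [DecidableEq ι]

theorem ofReal_eq_sqrt_mul_sign_mul_sqrt (r : ℝ) :
    (r : 𝕜) = (√|r| : ℝ) * (if 0 ≤ r then 1 else -1) * (√|r| : ℝ) := by
  have habs : ((√|r| : ℝ) : 𝕜) * (√|r| : ℝ) = (|r| : ℝ) := by
    rw [← RCLike.ofReal_mul, Real.mul_self_sqrt (abs_nonneg r)]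
  rw [mul_right_comm, habs]
  split_ifs with h
  · rw [abs_of_nonneg h, mul_one]
  · rw [abs_of_neg (not_le.1 h)]
    simp

theorem exists_eq_conjTranspose_mul_diagonal_mul {C : Matrix ι ι 𝕜} (hC : C.IsHermitian) :
    ∃ (M : Matrix ι ι 𝕜) (D : ι → 𝕜), (∀ j, D j = 1 ∨ D j = -1) ∧ C = Mᴴ * diagonal D * M := by
  let U : Matrix ι ι 𝕜 := hC.eigenvectorUnitary
  let R : Matrix ι ι 𝕜 := diagonal fun j => ((√|hC.eigenvalues j| : ℝ) : 𝕜)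
  let D : ι → 𝕜 := fun j => if 0 ≤ hC.eigenvalues j then 1 else -1
  have hspec : C = U * diagonal (fun j => (hC.eigenvalues j : 𝕜)) * Uᴴ := hC.spectral_theorem
  have hdiag : diagonal (fun j => (hC.eigenvalues j : 𝕜)) = R * diagonal D * R := by
    simp only [R, D, diagonal_mul_diagonal, ← ofReal_eq_sqrt_mul_sign_mul_sqrt]
  have hR : Rᴴ = R := by simp [R, diagonal_conjTranspose, Pi.star_def]
  refine ⟨R * Uᴴ, D, fun j => ite_eq_or_eq _ _ _, ?_⟩
  calc C = U * (R * diagonal D * R) * Uᴴ := by rw [hspec, hdiag]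
    _ = (R * Uᴴ)ᴴ * diagonal D * (R * Uᴴ) := by
      simp only [conjTranspose_mul, conjTranspose_conjTranspose, hR, Matrix.mul_assoc]

end Sylvester

section Hermitian

open Matrix

variable {𝕜 A ι : Type*} [RCLike 𝕜] [CommRing A] [StarRing A] [Algebra 𝕜 A] [StarModule 𝕜 A]

theorem conjTranspose_map_algebraMap {m n : Type*} (M : Matrix m n 𝕜) :
    (M.map (algebraMap 𝕜 A))ᴴ = Mᴴ.map (algebraMap 𝕜 A) :=
  (conjTranspose_map _ algebraMap_star_comm).symm

theorem exists_isHermitian_eq_map_algebraMap [Nontrivial A] {𝒜 : Subalgebra 𝕜 A}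
    (h𝒜 : 𝒜 ⊓ star 𝒜 ≤ ⊥) {L : Matrix ι ι A} (hL : L.IsHermitian) (hmem : ∀ i j, L i j ∈ 𝒜) :
    ∃ C : Matrix ι ι 𝕜, C.IsHermitian ∧ L = C.map (algebraMap 𝕜 A) := by
  have hconst (i j : ι) : ∃ c, algebraMap 𝕜 A c = L i j := by
    refine Algebra.mem_bot.1 (h𝒜 ⟨hmem i j, ?_⟩)
    rw [SetLike.mem_coe, Subalgebra.mem_star_iff, hL.apply]
    exact hmem j i
  choose c hc using hconst
  have hLC : L = (of c).map (algebraMap 𝕜 A) := Matrix.ext fun i j => (hc i j).symm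
  refine ⟨of c, map_injective (algebraMap 𝕜 A).injective ?_, hLC⟩
  dsimp only
  rw [← conjTranspose_map_algebraMap, ← hLC, hL.eq]

variable [Fintype ι] [DecidableEq ι] [Nontrivial A] {𝒜 : Subalgebra 𝕜 A} {G P Q Q' : Matrix ι ι A}

theorem exists_isHermitian_eq_conjTranspose_mul_map_mul (h𝒜 : 𝒜 ⊓ star 𝒜 ≤ ⊥)
    (hG : G.IsHermitian) (hGPQ : G = P * Q) (hP : P ∈ (star 𝒜).matrix) (hQ' : Q' ∈ 𝒜.matrix)
    (hQQ' : Q * Q' = 1) :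
    ∃ C : Matrix ι ι 𝕜, C.IsHermitian ∧ G = Qᴴ * C.map (algebraMap 𝕜 A) * Q := by
  have hQ'Q : Q' * Q = 1 := mul_eq_one_comm.1 hQQ'
  have hL : Q'ᴴ * G * Q' = Q'ᴴ * P := by
    rw [hGPQ, Matrix.mul_assoc, Matrix.mul_assoc, hQQ', Matrix.mul_one]
  have hQ'H : Q'ᴴ ∈ (star 𝒜).matrix := fun i j =>
    Subalgebra.mem_star_iff _ _ |>.2 (by simpa using hQ' j i)
  obtain ⟨C, hC, hLC⟩ := exists_isHermitian_eq_map_algebraMap (𝒜 := star 𝒜)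
    (by rwa [star_star, inf_comm]) (isHermitian_conjTranspose_mul_mul Q' hG)
    (hL ▸ mul_mem hQ'H hP)
  refine ⟨C, hC, ?_⟩
  calc G = (Q' * Q)ᴴ * G * (Q' * Q) := by simp [hQ'Q]
    _ = Qᴴ * (Q'ᴴ * G * Q') * Q := by simp only [conjTranspose_mul, Matrix.mul_assoc]
    _ = Qᴴ * C.map (algebraMap 𝕜 A) * Q := by rw [hLC]

theorem exists_eq_conjTranspose_mul_diagonal_mul_of_factorization (h𝒜 : 𝒜 ⊓ star 𝒜 ≤ ⊥)
    (hG : G.IsHermitian) (hunit : IsUnit G) (hGPQ : G = P * Q) (hP : P ∈ (star 𝒜).matrix)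
    (hQ : Q ∈ 𝒜.matrix) (hQ' : Q' ∈ 𝒜.matrix) (hQQ' : Q * Q' = 1) :
    ∃ (B : Matrix ι ι A) (D : ι → 𝕜), (∀ j, D j = 1 ∨ D j = -1) ∧ B ∈ 𝒜.matrix ∧
      (∃ B' ∈ 𝒜.matrix, B * B' = 1 ∧ B' * B = 1) ∧
      G = Bᴴ * diagonal (fun j => D j • 1) * B := by
  obtain ⟨C, hC, hGC⟩ :=
    exists_isHermitian_eq_conjTranspose_mul_map_mul h𝒜 hG hGPQ hP hQ' hQQ'
  obtain ⟨M, D, hD, hCM⟩ := exists_eq_conjTranspose_mul_diagonal_mul hC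
  have hGB : G = (M.map (algebraMap 𝕜 A) * Q)ᴴ * diagonal (fun j => D j • 1) *
      (M.map (algebraMap 𝕜 A) * Q) := by
    have hdiag : (diagonal D).map (algebraMap 𝕜 A) = diagonal fun j => D j • 1 := by
      rw [diagonal_map (map_zero _)]
      simp only [Algebra.algebraMap_eq_smul_one]
    rw [hGC, hCM, Matrix.map_mul, Matrix.map_mul, hdiag, conjTranspose_mul,
      conjTranspose_map_algebraMap]
    simp only [Matrix.mul_assoc]
  have hM : IsUnit M.det := by
    refine isUnit_iff_ne_zero.2 fun hdet => ?_
    rw [isUnit_iff_isUnit_det, hGB] at hunit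
    simp [← RingHom.mapMatrix_apply, ← RingHom.map_det, hdet] at hunit
  have hmap (N : Matrix ι ι 𝕜) : N.map (algebraMap 𝕜 A) ∈ 𝒜.matrix :=
    fun _ _ => 𝒜.algebraMap_mem _
  refine ⟨_, D, hD, mul_mem (hmap M) hQ,
    ⟨_, mul_mem hQ' (hmap M⁻¹), ?_⟩, hGB⟩
  have hBB' : M.map (algebraMap 𝕜 A) * Q * (Q' * M⁻¹.map (algebraMap 𝕜 A)) = 1 := by
    rw [Matrix.mul_assoc, ← Matrix.mul_assoc Q, hQQ', Matrix.one_mul, ← Matrix.map_mul,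
      mul_nonsing_inv _ hM]
    exact Matrix.map_one _ (map_zero _) (map_one _)
  exact ⟨hBB', mul_eq_one_comm.1 hBB'⟩

end Hermitian

section Equicontinuous

open Topology Uniformity

theorem isClosed_setOf_exists_tendsto_of_equicontinuous {α X Y : Type*} [TopologicalSpace X]
    [UniformSpace Y] [CompleteSpace Y] {l : Filter α} [l.NeBot] {U : α → X → Y}
    (hU : Equicontinuous U) : IsClosed {x | ∃ y, Tendsto (U · x) l (𝓝 y)} := by
  refine closure_subset_iff_isClosed.1 fun x hx => cauchy_map_iff_exists_tendsto.1 ?_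
  refine cauchy_map_iff'.2 fun V hV => ?_
  obtain ⟨W, hW, hWsymm, hWV⟩ := comp_comp_symm_mem_uniformity_sets hV
  obtain ⟨x', hxx', y, hy⟩ := mem_closure_iff_nhds.1 hx _ (hU x W hW)
  have hcauchy : ∀ᶠ p in l ×ˢ l, (U p.1 x', U p.2 x') ∈ W := cauchy_map_iff'.1 hy.cauchy_map hW
  refine hcauchy.mono fun p hp => ?_
  exact hWV ⟨_, ⟨_, hxx' p.1, hp⟩, hWsymm.symm _ _ (hxx' p.2)⟩

theorem totallyBounded_range_of_ultrafilter {α Y : Type*} [UniformSpace Y] {u : α → Y}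
    (hu : ∀ l : Ultrafilter α, ∃ y, Tendsto u l (𝓝 y)) : TotallyBounded (Set.range u) := by
  refine totallyBounded_iff_ultrafilter.2 fun f hf => ?_
  have : (comap u f).NeBot :=
    comap_neBot_iff_frequently.2 (Filter.Eventually.frequently (le_principal_iff.1 hf))
  obtain ⟨y, hy⟩ := hu (Ultrafilter.of (comap u f))
  have hmap : map u (Ultrafilter.of (comap u f)) = f := by
    rw [← Ultrafilter.coe_map, Ultrafilter.coe_inj]
    refine Ultrafilter.coe_le_coe.1 ?_
    exact (map_mono (Ultrafilter.of_le _)).trans map_comap_le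
  rw [← hmap]
  exact hy.cauchy_map

theorem exists_finset_forall_dist_lt_of_totallyBounded_range {α Y : Type*}
    [PseudoMetricSpace Y] {u : α → Y} (hu : TotallyBounded (Set.range u)) {ε : ℝ} (hε : 0 < ε) :
    ∃ s : Finset α, ∀ a, ∃ b ∈ s, dist (u a) (u b) < ε := by
  rw [← Set.image_univ] at hu
  obtain ⟨s, -, hs, hcov⟩ := Set.exists_subset_image_finite_and.1
    (Metric.finite_approx_of_totallyBounded hu ε hε)
  refine ⟨hs.toFinset, fun a => ?_⟩
  simpa using hcov ⟨a, trivial, rfl⟩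

variable {α 𝕜 E F : Type*} [Semiring 𝕜] [TopologicalSpace E] [AddCommMonoid E] [Module 𝕜 E]

/-- The vectors on which a family of linear maps converges along a filter. When it is closed, it
suffices to test convergence on a set with dense span. -/
def convergenceSubmodule [TopologicalSpace F] [AddCommMonoid F] [Module 𝕜 F] [ContinuousAdd F]
    [ContinuousConstSMul 𝕜 F] (U : α → E →L[𝕜] F) (l : Filter α) : Submodule 𝕜 E where
  carrier := {x | ∃ y, Tendsto (U · x) l (𝓝 y)}
  add_mem' := by
    rintro x x' ⟨y, hy⟩ ⟨y', hy'⟩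
    exact ⟨y + y', by simpa using hy.add hy'⟩
  zero_mem' := ⟨0, by simpa using tendsto_const_nhds⟩
  smul_mem' := by
    rintro c x ⟨y, hy⟩
    exact ⟨c • y, by simpa using hy.const_smul c⟩

end Equicontinuous

section GNS

open scoped ComplexOrder

variable {A ι : Type*} [CStarAlgebra A] [PartialOrder A] [StarOrderedRing A] (φ : A →ₚ[ℂ] ℂ)

theorem continuous_toPreGNS : Continuous φ.toPreGNS := by
  refine AddMonoidHomClass.continuous_of_bound φ.toPreGNS ‖φ.toPreGNS 1‖ fun a => ?_
  have ha : φ.toPreGNS a = φ.leftMulMapPreGNS a (φ.toPreGNS 1) := by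
    simp
  rw [ha, mul_comm]
  exact (φ.leftMulMapPreGNS a).le_of_opNorm_le
    (LinearMap.mkContinuous_norm_le _ (norm_nonneg a) _) _

/-- The canonical map of a C⋆-algebra into the GNS Hilbert space of a positive functional, used to
transfer the theory of Hilbert bases to the algebra. -/
def toGNS : A →L[ℂ] φ.GNS :=
  UniformSpace.Completion.toComplL.comp ⟨φ.toPreGNS.toLinearMap, continuous_toPreGNS φ⟩

theorem inner_toGNS (a b : A) : inner ℂ (toGNS φ a) (toGNS φ b) = φ (star a * b) :=
  (UniformSpace.Completion.inner_coe _ _).trans (φ.preGNS_inner_def _ _)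

theorem denseRange_toGNS : DenseRange (toGNS φ) :=
  UniformSpace.Completion.denseRange_coe.comp φ.toPreGNS.surjective.denseRange
    (UniformSpace.Completion.continuous_coe _)

theorem hasSum_mul_of_orthonormal [DecidableEq ι] {e : ι → A}
    (he : ∀ i j, φ (star (e i) * e j) = if i = j then 1 else 0)
    (hdense : (Submodule.span ℂ (Set.range e)).topologicalClosure = ⊤) (a b : A) :
    HasSum (fun i => φ (star a * e i) * φ (star (e i) * b)) (φ (star a * b)) := by
  have horth : Orthonormal ℂ (toGNS φ ∘ e) :=
    orthonormal_iff_ite.2 fun i j => (inner_toGNS φ _ _).trans (he i j)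
  have hspan : (Submodule.span ℂ (Set.range (toGNS φ ∘ e))).topologicalClosure = ⊤ := by
    have h := (denseRange_toGNS φ).topologicalClosure_map_submodule hdense
    rwa [Submodule.map_span, ← Set.range_comp] at h
  simpa only [HilbertBasis.coe_mk, Function.comp_apply, inner_toGNS] using
    (HilbertBasis.mk horth hspan.ge).hasSum_inner_mul_inner (toGNS φ a) (toGNS φ b)

end GNS

section Algebra

variable {k : ℕ}

@[simp]
theorem apExp_apply (lam x : Fin k → ℝ) :
    apExp k lam x = Complex.exp (Complex.I * ((∑ j, lam j * x j : ℝ) : ℂ)) := rfl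

theorem apExp_zero : apExp k 0 = 1 := by
  ext x
  simp

theorem apExp_add (lam mu : Fin k → ℝ) : apExp k (lam + mu) = apExp k lam * apExp k mu := by
  ext x
  simp [add_mul, Finset.sum_add_distrib, mul_add, Complex.exp_add]

theorem star_apExp (lam : Fin k → ℝ) : star (apExp k lam) = apExp k (-lam) := by
  ext x
  simp [← Complex.exp_conj]

theorem star_APalg : star (APalg k) = APalg k := by
  have hrange : star (Set.range (apExp k)) = Set.range (apExp k) := by
    rw [← Set.image_star, ← Set.range_comp]
    exact (Equiv.neg (Fin k → ℝ)).surjective.range_comp (apExp k) ▸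
      congrArg Set.range (funext star_apExp)
  rw [APalg, ← Subalgebra.topologicalClosure_star_comm, Subalgebra.star_adjoin_comm, hrange]

theorem adjoin_range_apExp_eq_span :
    Subalgebra.toSubmodule (Algebra.adjoin ℂ (Set.range (apExp k))) =
      Submodule.span ℂ (Set.range (apExp k)) := by
  let E : Submonoid (APB k) :=
    { carrier := Set.range (apExp k)
      one_mem' := ⟨0, apExp_zero⟩
      mul_mem' := by
        rintro _ _ ⟨lam, rfl⟩ ⟨mu, rfl⟩
        exact ⟨lam + mu, apExp_add lam mu⟩ }
  rw [Algebra.adjoin_eq_span, show Set.range (apExp k) = E from rfl, E.closure_eq]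

/-- The algebra `AP^k` as a C⋆-subalgebra of the bounded continuous functions, so that the GNS
construction applies to the Bohr mean. -/
def AP (k : ℕ) : StarSubalgebra ℂ (APB k) where
  __ := APalg k
  star_mem' {f} hf := by
    rwa [← star_APalg] at hf

instance : Nontrivial (APB k) := NormOneClass.nontrivial

instance : IsClosed (AP k : Set (APB k)) :=
  Subalgebra.isClosed_topologicalClosure _

instance : PartialOrder (AP k) := CStarAlgebra.spectralOrder _

instance : StarOrderedRing (AP k) := CStarAlgebra.spectralOrderedRing _

namespace AP

/-- The exponential `e_λ` as an element of `AP^k`. -/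
def exp (lam : Fin k → ℝ) : AP k :=
  ⟨apExp k lam, Subalgebra.le_topologicalClosure _ (Algebra.subset_adjoin ⟨lam, rfl⟩)⟩

theorem coe_exp (lam : Fin k → ℝ) : (exp lam : APB k) = apExp k lam := rfl

theorem exp_zero : exp (0 : Fin k → ℝ) = 1 := Subtype.ext apExp_zero

theorem exp_add (lam mu : Fin k → ℝ) : exp (lam + mu) = exp lam * exp mu :=
  Subtype.ext (apExp_add lam mu)

theorem star_exp (lam : Fin k → ℝ) : star (exp lam) = exp (-lam) := Subtype.ext (star_apExp lam)

theorem topologicalClosure_span_range_exp :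
    (Submodule.span ℂ (Set.range (exp (k := k)))).topologicalClosure = ⊤ := by
  have hspan : (Subtype.val '' (Submodule.span ℂ (Set.range (exp (k := k))) : Set (AP k))) =
      (Algebra.adjoin ℂ (Set.range (apExp k)) : Set (APB k)) := by
    rw [← Subalgebra.coe_toSubmodule, adjoin_range_apExp_eq_span]
    have hmap := Submodule.map_span (AP k).subtype.toLinearMap (Set.range exp)
    rw [← Set.range_comp] at hmap
    exact congrArg SetLike.coe hmap
  refine (Submodule.dense_iff_topologicalClosure_eq_top).1 fun f => ?_
  rw [closure_subtype, hspan]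
  exact f.2

theorem submodule_eq_top {p : Submodule ℂ (AP k)} (hp : IsClosed (p : Set (AP k)))
    (hexp : ∀ lam, exp lam ∈ p) : p = ⊤ := by
  rw [eq_top_iff, ← topologicalClosure_span_range_exp]
  exact Submodule.topologicalClosure_minimal _
    (Submodule.span_le.2 (Set.range_subset_iff.2 hexp)) hp

end AP

end Algebra

section BohrMean

open Topology
open scoped ComplexOrder ProbabilityTheory

variable {k : ℕ}

/-- The normalized Lebesgue measure on the box `[-T, T]^k`; it is zero for `T < 0 < k`. -/
def boxMeasure (k : ℕ) (T : ℝ) : Measure (Fin k → ℝ) :=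
  volume[|Set.Icc (fun _ => -T) (fun _ => T)]

instance (T : ℝ) : IsZeroOrProbabilityMeasure (boxMeasure k T) :=
  inferInstanceAs (IsZeroOrProbabilityMeasure volume[|Set.Icc _ _])

theorem integral_boxMeasure {T : ℝ} (hT : 0 < T) (f : (Fin k → ℝ) → ℂ) :
    ∫ x, f x ∂boxMeasure k T = (((2 * T) ^ k : ℝ) : ℂ)⁻¹ *
      ∫ x in Set.Icc (fun _ => -T : Fin k → ℝ) (fun _ => T), f x := by
  have hvol : (volume (Set.Icc (fun _ => -T : Fin k → ℝ) (fun _ => T))).toReal = (2 * T) ^ k := by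
    rw [Real.volume_Icc_pi_toReal fun _ => by linarith]
    simp [two_mul]
  rw [boxMeasure, ProbabilityTheory.cond, integral_smul_measure, ENNReal.toReal_inv, hvol,
    Complex.real_smul, Complex.ofReal_inv]

/-- The mean over the box `[-T, T]^k`; the Bohr mean is its limit as `T → ∞`. -/
def boxMean (k : ℕ) (T : ℝ) : APB k →L[ℂ] ℂ :=
  LinearMap.mkContinuous
    { toFun f := ∫ x, f x ∂boxMeasure k T
      map_add' f g := integral_add (f.integrable _) (g.integrable _)
      map_smul' c f := integral_const_mul c f }
    1 fun f => (f.norm_integral_le_mul_norm _).trans <|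
      mul_le_mul_of_nonneg_right measureReal_le_one (norm_nonneg f)

theorem boxMean_apply (T : ℝ) (f : APB k) : boxMean k T f = ∫ x, f x ∂boxMeasure k T := rfl

theorem equicontinuous_boxMean (k : ℕ) : Equicontinuous fun T f => boxMean k T f :=
  (LipschitzWith.uniformEquicontinuous _ 1 fun T => (boxMean k T).lipschitz.weaken
    (LinearMap.mkContinuous_norm_le _ zero_le_one _)).equicontinuous

theorem boxMean_nonneg (T : ℝ) {f : APB k} (hf : ∀ x, 0 ≤ f x) : 0 ≤ boxMean k T f :=
  integral_nonneg hf

theorem setIntegral_Icc_exp_mul_I {T : ℝ} (hT : 0 ≤ T) (a : ℝ) :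
    ∫ x in Set.Icc (-T) T, Complex.exp (Complex.I * ((a * x : ℝ) : ℂ)) =
      ((2 * T : ℝ) : ℂ) * Real.sinc (a * T) := by
  rw [integral_Icc_eq_integral_Ioc, ← intervalIntegral.integral_of_le (by linarith)]
  rcases eq_or_ne a 0 with rfl | ha
  · simp [two_mul]
  · have hsubst := intervalIntegral.integral_comp_mul_left
      (fun t : ℝ => Complex.exp (t * Complex.I)) ha (a := -T) (b := T)
    simp only [mul_comm Complex.I]
    rw [hsubst, mul_neg, integral_exp_mul_I_eq_sinc, Complex.real_smul]
    push_cast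
    field_simp

theorem boxMean_apExp {T : ℝ} (hT : 0 < T) (lam : Fin k → ℝ) :
    boxMean k T (apExp k lam) = ∏ j, (Real.sinc (lam j * T) : ℂ) := by
  have hprod (x : Fin k → ℝ) :
      apExp k lam x = ∏ j, Complex.exp (Complex.I * ((lam j * x j : ℝ) : ℂ)) := by
    rw [apExp_apply, ← Complex.exp_sum, Complex.ofReal_sum, Finset.mul_sum]
  have hT' : ((2 * T : ℝ) : ℂ) ^ k ≠ 0 := pow_ne_zero _ (by exact_mod_cast (by positivity))
  rw [boxMean_apply, integral_boxMeasure hT, ← Set.pi_univ_Icc, volume_pi,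
    Measure.restrict_pi_pi]
  simp only [hprod]
  rw [integral_fintype_prod_eq_prod
    (f := fun j x => Complex.exp (Complex.I * ((lam j * x : ℝ) : ℂ)))]
  simp only [setIntegral_Icc_exp_mul_I hT.le, Finset.prod_mul_distrib, Finset.prod_const,
    Finset.card_univ, Fintype.card_fin]
  rw [Complex.ofReal_pow, inv_mul_cancel_left₀ hT']

theorem tendsto_sinc_mul_atTop (a : ℝ) :
    Tendsto (fun T => Real.sinc (a * T)) atTop (𝓝 (if a = 0 then 1 else 0)) := by
  split_ifs with ha
  · simp [ha]
  · have hinv : Tendsto (fun T : ℝ => (a * T)⁻¹) atTop (𝓝 0) := by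
      simpa [mul_comm] using tendsto_inv_atTop_zero.mul_const a⁻¹
    refine (bdd_le_mul_tendsto_zero' 1
      (.of_forall fun T => Real.abs_sin_le_one (a * T)) hinv).congr' ?_
    filter_upwards [eventually_ne_atTop 0] with T hT
    rw [Real.sinc_of_ne_zero (mul_ne_zero ha hT), div_eq_mul_inv]

theorem tendsto_boxMean_apExp (lam : Fin k → ℝ) :
    Tendsto (fun T => boxMean k T (apExp k lam)) atTop (𝓝 (if lam = 0 then 1 else 0)) := by
  have hlim : (∏ j, ((if lam j = 0 then 1 else 0 : ℝ) : ℂ)) = if lam = 0 then 1 else 0 := by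
    rw [← Complex.ofReal_prod, Finset.prod_ite_zero]
    simp [funext_iff, apply_ite Complex.ofReal]
  rw [← hlim]
  refine (tendsto_finsetProd Finset.univ fun j _ =>
    (tendsto_sinc_mul_atTop (lam j)).ofReal).congr' ?_
  filter_upwards [eventually_gt_atTop 0] with T hT
  exact (boxMean_apExp hT lam).symm

theorem exists_tendsto_boxMean (f : AP k) : ∃ m, Tendsto (fun T => boxMean k T f) atTop (𝓝 m) := by
  let U (T : ℝ) : AP k →L[ℂ] ℂ := (boxMean k T).comp (AP k).toSubmodule.subtypeL
  have hU : Equicontinuous fun T (f : AP k) => U T f := fun f V hV =>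
    continuous_subtype_val.continuousAt.eventually (equicontinuous_boxMean k f V hV)
  have htop : convergenceSubmodule U atTop = ⊤ :=
    AP.submodule_eq_top (isClosed_setOf_exists_tendsto_of_equicontinuous hU)
      fun lam => ⟨_, tendsto_boxMean_apExp lam⟩
  exact htop.ge Submodule.mem_top

/-- Translation `f ↦ f(· + t)` of bounded continuous functions, to be restricted to `AP^k`. -/
def translateAPB (t : Fin k → ℝ) : APB k →L[ℂ] APB k :=
  compContinuousCLM ℂ ℂ ⟨(· + t), by fun_prop⟩

theorem norm_translateAPB_le_one (t : Fin k → ℝ) : ‖translateAPB t‖ ≤ 1 :=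
  norm_compContinuousCLM_le_one _

theorem translateAPB_apExp (t lam : Fin k → ℝ) :
    translateAPB t (apExp k lam) = apExp k lam t • apExp k lam := by
  ext x
  simp [translateAPB, mul_add, Finset.sum_add_distrib, Complex.exp_add, mul_comm]

namespace AP

/-- The Bohr mean `lim_{T→∞} (2T)^{-k} ∫_{[-T,T]^k} f` on `AP^k`, as a positive functional. -/
def mean (k : ℕ) : AP k →ₚ[ℂ] ℂ :=
  .mk₀
    (linearMapOfTendsto (fun f => (exists_tendsto_boxMean f).choose)
      (fun T => (boxMean k T).toLinearMap ∘ₗ (AP k).toSubmodule.subtype)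
      (tendsto_pi_nhds.2 fun f => (exists_tendsto_boxMean f).choose_spec))
    fun f hf => by
      obtain ⟨g, rfl⟩ := CStarAlgebra.nonneg_iff_eq_star_mul_self.1 hf
      exact ge_of_tendsto' (exists_tendsto_boxMean (star g * g)).choose_spec fun T =>
        boxMean_nonneg T fun x => star_mul_self_nonneg (g.1 x)

theorem tendsto_boxMean (f : AP k) : Tendsto (fun T => boxMean k T f) atTop (𝓝 (mean k f)) :=
  (exists_tendsto_boxMean f).choose_spec

theorem mean_nonneg {f : AP k} (hf : ∀ x, 0 ≤ f.1 x) : 0 ≤ mean k f :=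
  ge_of_tendsto' (tendsto_boxMean f) fun T => boxMean_nonneg T hf

theorem mean_exp (lam : Fin k → ℝ) : mean k (exp lam) = if lam = 0 then 1 else 0 :=
  tendsto_nhds_unique (tendsto_boxMean _) (tendsto_boxMean_apExp lam)

theorem mean_one : mean k 1 = 1 := by
  rw [← exp_zero, mean_exp, if_pos rfl]

theorem translateAPB_mem (t : Fin k → ℝ) (f : AP k) : translateAPB t f ∈ AP k := by
  let p : Submodule ℂ (AP k) :=
    (AP k).toSubmodule.comap ((translateAPB t).toLinearMap ∘ₗ (AP k).toSubmodule.subtype)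
  have hp : IsClosed (p : Set (AP k)) :=
    (Subalgebra.isClosed_topologicalClosure _).preimage
      ((translateAPB t).continuous.comp continuous_subtype_val)
  refine (submodule_eq_top hp fun lam => ?_).ge (Submodule.mem_top (x := f))
  change translateAPB t (apExp k lam) ∈ AP k
  rw [translateAPB_apExp]
  exact SMulMemClass.smul_mem _ (exp lam).2

/-- Translation `f ↦ f(· + t)` on `AP^k`, under which the Bohr mean is invariant. -/
def translate (t : Fin k → ℝ) : AP k →L[ℂ] AP k :=
  ((translateAPB t).comp (AP k).toSubmodule.subtypeL).codRestrict (AP k).toSubmodule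
    (translateAPB_mem t)

theorem translate_apply (t : Fin k → ℝ) (f : AP k) (x : Fin k → ℝ) :
    (translate t f).1 x = f.1 (x + t) := rfl

theorem translate_exp (t lam : Fin k → ℝ) :
    translate t (exp lam) = (exp lam).1 t • exp lam :=
  Subtype.ext (translateAPB_apExp t lam)

theorem equicontinuous_translate (k : ℕ) :
    Equicontinuous fun (t : Fin k → ℝ) (f : AP k) => translate t f :=
  (LipschitzWith.uniformEquicontinuous _ 1 fun t => (translate t).lipschitz.weaken <|
    ContinuousLinearMap.opNorm_le_bound _ zero_le_one fun f =>
      (translateAPB t).le_of_opNorm_le (norm_translateAPB_le_one t) f.1).equicontinuous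

theorem mean_translate (t : Fin k → ℝ) (f : AP k) : mean k (translate t f) = mean k f := by
  let p : Submodule ℂ (AP k) :=
    LinearMap.eqLocus ((mean k).toLinearMap ∘ₗ (translate t).toLinearMap) (mean k).toLinearMap
  have hp : IsClosed (p : Set (AP k)) :=
    isClosed_eq ((map_continuous (mean k)).comp (translate t).continuous) (map_continuous (mean k))
  refine (submodule_eq_top hp fun lam => ?_).ge (Submodule.mem_top (x := f))
  change mean k (translate t (exp lam)) = mean k (exp lam)
  rw [translate_exp, map_smul, mean_exp]
  split_ifs with hlam
  · simp [hlam, coe_exp]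
  · exact smul_zero _

-- Along an ultrafilter, `e_λ(t)` converges in the unit circle, so the translates of `e_λ` converge.
theorem totallyBounded_range_translate (f : AP k) :
    TotallyBounded (Set.range fun t => translate t f) := by
  refine totallyBounded_range_of_ultrafilter fun l => ?_
  have hl : IsClosed (convergenceSubmodule translate (l : Filter (Fin k → ℝ)) : Set (AP k)) :=
    isClosed_setOf_exists_tendsto_of_equicontinuous (equicontinuous_translate k)
  refine (submodule_eq_top hl fun lam => ?_).ge (Submodule.mem_top (x := f))
  obtain ⟨z, -, hz⟩ := (isCompact_sphere (0 : ℂ) 1).ultrafilter_le_nhds'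
    (l.map (apExp k lam)) (Ultrafilter.mem_map.2 (Filter.univ_mem' fun t => by
      simp [Complex.norm_exp]))
  refine ⟨z • exp lam, ?_⟩
  simp only [translate_exp]
  exact Tendsto.smul_const hz _

theorem exists_le_sum_translate {f : AP k} (hf : ∀ x, 0 ≤ f.1 x) (hne : f ≠ 0) :
    ∃ ε : ℝ, 0 < ε ∧ ∃ s : Finset (Fin k → ℝ), ∀ y, (ε : ℂ) ≤ ∑ t ∈ s, f.1 (y + t) := by
  obtain ⟨x, hx⟩ : ∃ x, f.1 x ≠ 0 := by
    contrapose! hne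
    exact Subtype.ext (BoundedContinuousFunction.ext hne)
  have hpos : 0 < (f.1 x).re / 2 := half_pos (Complex.pos_iff.1 ((hf x).lt_of_ne' hx)).1
  obtain ⟨s, hs⟩ := exists_finset_forall_dist_lt_of_totallyBounded_range
    (totallyBounded_range_translate f) hpos
  refine ⟨_, hpos, s, fun y => ?_⟩
  obtain ⟨t, ht, hdist⟩ := hs (x - y)
  have hval : ‖f.1 x - f.1 (y + t)‖ < (f.1 x).re / 2 := by
    rw [← dist_eq_norm]
    simpa [translate_apply] using (dist_coe_le_dist y).trans_lt hdist
  have hre := (abs_lt.1 ((Complex.abs_re_le_norm _).trans_lt hval)).2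
  rw [Complex.sub_re] at hre
  calc (((f.1 x).re / 2 : ℝ) : ℂ) ≤ f.1 (y + t) :=
        Complex.le_def.2 ⟨by rw [Complex.ofReal_re]; linarith, (Complex.nonneg_iff.1 (hf _)).2⟩
    _ ≤ ∑ t ∈ s, f.1 (y + t) := Finset.single_le_sum (fun t _ => hf (y + t)) ht

theorem eq_zero_of_mean_eq_zero {f : AP k} (hf : ∀ x, 0 ≤ f.1 x) (hmean : mean k f = 0) :
    f = 0 := by
  by_contra hne
  obtain ⟨ε, hε, s, hs⟩ := exists_le_sum_translate hf hne
  have hnonneg : 0 ≤ mean k (∑ t ∈ s, translate t f - (ε : ℂ) • 1) :=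
    mean_nonneg fun y => by simpa [translate_apply] using hs y
  have hnonpos : (ε : ℂ) ≤ 0 := by
    simpa [mean_translate, hmean, mean_one] using hnonneg
  exact hε.not_ge (Complex.le_def.1 hnonpos).1

end AP

end BohrMean

section BohrCoeff

open Pointwise
open scoped ComplexOrder

variable {k : ℕ}

namespace AP

theorem bohrCoeff_eq_mean (f : AP k) (lam : Fin k → ℝ) :
    bohrCoeff k f.1 lam = mean k (exp (-lam) * f) := by
  refine Tendsto.limUnder_eq ((tendsto_boxMean _).congr' ?_)
  filter_upwards [eventually_gt_atTop 0] with T hT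
  rw [boxMean_apply, integral_boxMeasure hT]
  simp [coe_exp]

theorem bohrCoeff_add (f g : AP k) (lam : Fin k → ℝ) :
    bohrCoeff k (f + g).1 lam = bohrCoeff k f.1 lam + bohrCoeff k g.1 lam := by
  simp only [bohrCoeff_eq_mean, mul_add, map_add]

theorem bohrCoeff_star (f : AP k) (lam : Fin k → ℝ) :
    bohrCoeff k (star f).1 lam = star (bohrCoeff k f.1 (-lam)) := by
  simp only [bohrCoeff_eq_mean]
  rw [← map_star, star_mul', star_exp, neg_neg]

theorem bohrCoeff_algebraMap (c : ℂ) (lam : Fin k → ℝ) :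
    bohrCoeff k (algebraMap ℂ (AP k) c).1 lam = if lam = 0 then c else 0 := by
  rw [bohrCoeff_eq_mean, Algebra.algebraMap_eq_smul_one, mul_smul_one, map_smul, mean_exp]
  simp

theorem hasSum_mean_mul (f g : AP k) :
    HasSum (fun lam => mean k (star f * exp lam) * mean k (star (exp lam) * g))
      (mean k (star f * g)) := by
  refine hasSum_mul_of_orthonormal (mean k) (fun lam mu => ?_) topologicalClosure_span_range_exp f g
  rw [star_exp, ← exp_add, mean_exp]
  simp only [neg_add_eq_zero]

-- This is Parseval's identity for `star (e_{-λ} g)` and `f`.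
theorem hasSum_bohrCoeff_mul (f g : AP k) (lam : Fin k → ℝ) :
    HasSum (fun mu => bohrCoeff k f.1 mu * bohrCoeff k g.1 (lam - mu))
      (bohrCoeff k (f * g).1 lam) := by
  have hg (mu : Fin k → ℝ) : exp (-lam) * g * exp mu = exp (-(lam - mu)) * g := by
    rw [mul_right_comm, ← exp_add, neg_add_eq_sub, neg_sub]
  have h := hasSum_mean_mul (star (exp (-lam) * g)) f
  simp only [star_star, hg, star_exp, ← bohrCoeff_eq_mean] at h
  rw [bohrCoeff_eq_mean, mul_comm f, ← mul_assoc]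
  exact h.congr_fun fun mu => mul_comm _ _

theorem eq_of_bohrCoeff_eq {f g : AP k} (h : ∀ lam, bohrCoeff k f.1 lam = bohrCoeff k g.1 lam) :
    f = g := by
  have hcoeff (lam : Fin k → ℝ) : mean k (star (exp lam) * (f - g)) = 0 := by
    rw [star_exp, mul_sub, map_sub, ← bohrCoeff_eq_mean, ← bohrCoeff_eq_mean, h, sub_self]
  have hmean : mean k (star (f - g) * (f - g)) = 0 :=
    (hasSum_mean_mul (f - g) (f - g)).unique (by simpa only [hcoeff, mul_zero] using hasSum_zero)
  exact sub_eq_zero.1 <| (CStarRing.star_mul_self_eq_zero_iff _).1 <|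
    eq_zero_of_mean_eq_zero (fun x => star_mul_self_nonneg ((f - g).1 x)) hmean

end AP

theorem apMem_iff {Δ : Set (Fin k → ℝ)} {f : APB k} :
    APmem k Δ f ↔ f ∈ AP k ∧ ∀ lam ∉ Δ, bohrCoeff k f lam = 0 :=
  and_congr Iff.rfl (forall_congr' fun _ => not_imp_comm)

/-- The algebra `AP^k_Δ`, with `Δ` an additive submonoid of `ℝ^k` so that it is closed under
multiplication and contains the constants. -/
def apSubalgebra (Δ : AddSubmonoid (Fin k → ℝ)) : Subalgebra ℂ (APB k) where
  carrier := {f | APmem k Δ f}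
  add_mem' {f g} hf hg := by
    replace hf := apMem_iff.1 hf
    replace hg := apMem_iff.1 hg
    refine apMem_iff.2 ⟨add_mem hf.1 hg.1, fun lam hlam => ?_⟩
    exact (AP.bohrCoeff_add ⟨f, hf.1⟩ ⟨g, hg.1⟩ lam).trans
      (by rw [hf.2 lam hlam, hg.2 lam hlam, add_zero])
  mul_mem' {f g} hf hg := by
    replace hf := apMem_iff.1 hf
    replace hg := apMem_iff.1 hg
    refine apMem_iff.2 ⟨mul_mem hf.1 hg.1, fun lam hlam => ?_⟩
    refine (AP.hasSum_bohrCoeff_mul ⟨f, hf.1⟩ ⟨g, hg.1⟩ lam).unique ?_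
    convert hasSum_zero with mu
    by_cases hmu : mu ∈ Δ
    · have hlam' : lam - mu ∉ Δ := fun h => hlam (by simpa using add_mem h hmu)
      rw [hg.2 _ hlam', mul_zero]
    · rw [hf.2 _ hmu, zero_mul]
  algebraMap_mem' c := by
    refine apMem_iff.2 ⟨(AP k).algebraMap_mem c, fun lam hlam => ?_⟩
    exact (AP.bohrCoeff_algebraMap c lam).trans (if_neg (by rintro rfl; exact hlam (zero_mem Δ)))

theorem mem_apSubalgebra {Δ : AddSubmonoid (Fin k → ℝ)} {f : APB k} :
    f ∈ apSubalgebra Δ ↔ APmem k Δ f := Iff.rfl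

theorem star_mem_apSubalgebra_neg {Δ : AddSubmonoid (Fin k → ℝ)} {f : APB k}
    (hf : f ∈ apSubalgebra Δ) : star f ∈ apSubalgebra (-Δ) := by
  rw [mem_apSubalgebra, apMem_iff] at hf ⊢
  refine ⟨star_mem hf.1, fun lam hlam => ?_⟩
  exact (AP.bohrCoeff_star ⟨f, hf.1⟩ lam).trans (by rw [hf.2 _ hlam, star_zero])

theorem star_apSubalgebra (Δ : AddSubmonoid (Fin k → ℝ)) :
    star (apSubalgebra Δ) = apSubalgebra (-Δ) := by
  refine Subalgebra.ext fun f => ⟨fun hf => ?_, fun hf => ?_⟩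
  · exact star_star f ▸ star_mem_apSubalgebra_neg hf
  · exact neg_neg Δ ▸ star_mem_apSubalgebra_neg hf

theorem apSubalgebra_inf_star_le_bot {Δ : AddSubmonoid (Fin k → ℝ)} (hΔ : Δ.IsPointed) :
    apSubalgebra Δ ⊓ star (apSubalgebra Δ) ≤ ⊥ := by
  rw [star_apSubalgebra]
  rintro f ⟨hf, hf'⟩
  rw [SetLike.mem_coe, mem_apSubalgebra, apMem_iff] at hf hf'
  have hconst : (⟨f, hf.1⟩ : AP k) = algebraMap ℂ (AP k) (bohrCoeff k f 0) := by
    refine AP.eq_of_bohrCoeff_eq fun lam => ?_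
    rw [AP.bohrCoeff_algebraMap]
    split_ifs with hlam
    · rw [hlam]
    · by_cases hmem : lam ∈ Δ
      · exact hf'.2 lam fun hneg => hlam (hΔ lam hmem hneg)
      · exact hf.2 lam hmem
  exact Algebra.mem_bot.2 ⟨bohrCoeff k f 0, congrArg Subtype.val hconst.symm⟩

theorem isPointed_inf_neg {S : AddSubmonoid (Fin k → ℝ)} (hS : S.IsPointed)
    (Sg : AddSubmonoid (Fin k → ℝ)) : (Sg ⊓ -S).IsPointed := fun x hx hx' =>
  hS x (by simpa using hx'.2) hx.2

end BohrCoeff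

section Factorization

open Pointwise

variable {k n : ℕ}

theorem hermitian_canonical_factorization_symmetric_general {S : AddSubmonoid (Fin k → ℝ)}
    (hS : S.IsPointed) {Sg : AddSubgroup (Fin k → ℝ)} {G : Matrix (Fin n) (Fin n) (APB k)}
    (hG : G.IsHermitian)
    (hfact : ∃ Gp Gm, IsAPFactorization k S Sg G (fun _ : Fin n => (0 : Fin k → ℝ)) Gp Gm) :
    ∃ (B : Matrix (Fin n) (Fin n) (APB k)) (D : Fin n → ℂ),
      (∀ j, D j = 1 ∨ D j = -1) ∧
      (∀ i j, APmem k ((Sg : Set (Fin k → ℝ)) ∩ -S) (B i j)) ∧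
      (∃ Binv : Matrix (Fin n) (Fin n) (APB k),
        (∀ i j, APmem k ((Sg : Set (Fin k → ℝ)) ∩ -S) (Binv i j)) ∧
        B * Binv = 1 ∧ Binv * B = 1) ∧
      G = B.conjTranspose * Matrix.diagonal (fun j => D j • (1 : APB k)) * B := by
  obtain ⟨Gp, Gm, hGp, hGm, -, ⟨Gpr, -, hright⟩, ⟨Gml, hGml, hleft⟩, hprod⟩ := hfact
  have hGpGm : G = Gp * Gm := by simpa [apExp_zero] using hprod
  have hunit : IsUnit G := hGpGm ▸
    (IsUnit.of_mul_eq_one _ hright).mul (IsUnit.of_mul_eq_one_right _ hleft)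
  have hneg : -(Sg.toAddSubmonoid ⊓ -S) = Sg.toAddSubmonoid ⊓ S := by
    ext; simp
  refine exists_eq_conjTranspose_mul_diagonal_mul_of_factorization
    (apSubalgebra_inf_star_le_bot (isPointed_inf_neg hS Sg.toAddSubmonoid)) hG hunit hGpGm ?_
    hGm hGml (mul_eq_one_comm.1 hleft)
  rw [star_apSubalgebra, hneg]
  exact hGp

namespace IsHalfspace

variable {S : Set (Fin k → ℝ)}

/-- A halfspace as an additive submonoid of `ℝ^k`, forgetting scalar multiplication. -/
def addSubmonoid (hS : IsHalfspace k S) : AddSubmonoid (Fin k → ℝ) where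
  carrier := S
  zero_mem' := (hS.inter.ge rfl).1
  add_mem' hx hy := hS.add_mem _ hx _ hy

theorem isPointed_addSubmonoid (hS : IsHalfspace k S) : hS.addSubmonoid.IsPointed :=
  fun _ hx hx' => hS.inter.le ⟨hx, hx'⟩

end IsHalfspace

end Factorization

/-- **Theorem 5.5.**  Let `S ⊂ ℝ^k` be a halfspace and `Σ` an additive
subgroup of `ℝ^k`.  If `G ∈ (AP^k_Σ)^{n×n}` takes Hermitian values and admits
a canonical left `(AP_S)_Σ` factorization, then it admits one in the symmetric
form `G = B* D B`, where `B` is invertible over `AP^k_{Σ∩(-S)}` and `D` is a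
constant diagonal matrix with `±1` entries on the diagonal. -/
theorem hermitian_canonical_factorization_symmetric (k n : ℕ)
    (S : Set (Fin k → ℝ)) (hS : IsHalfspace k S)
    (Sg : AddSubgroup (Fin k → ℝ))
    (G : Matrix (Fin n) (Fin n) (APB k))
    (hG : ∀ i j, APmem k (↑Sg) (G i j))
    (hherm : ∀ (t : Fin k → ℝ) (i j : Fin n),
      (starRingEnd ℂ) (G i j t) = G j i t)
    (hfact : ∃ Gp Gm, IsAPFactorization k S (↑Sg) G
      (fun _ : Fin n => (0 : Fin k → ℝ)) Gp Gm) :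
    ∃ (B : Matrix (Fin n) (Fin n) (APB k)) (D : Fin n → ℂ),
      (∀ j, D j = 1 ∨ D j = -1) ∧
      (∀ i j, APmem k ((↑Sg : Set (Fin k → ℝ)) ∩ (-S)) (B i j)) ∧
      (∃ Binv : Matrix (Fin n) (Fin n) (APB k),
        (∀ i j, APmem k ((↑Sg : Set (Fin k → ℝ)) ∩ (-S)) (Binv i j)) ∧
        B * Binv = 1 ∧ Binv * B = 1) ∧
      G = B.conjTranspose * Matrix.diagonal (fun j => D j • (1 : APB k)) * B :=
  hermitian_canonical_factorization_symmetric_general hS.isPointed_addSubmonoid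
    (Matrix.ext fun i j => BoundedContinuousFunction.ext fun t => hherm t j i) hfact
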